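/- (Proposition 2, part 2) Let D be any disjunctive state, i a nominal, φ a hybrid formula, and j a nominal not occurring in D ⋁ (P, i : □φ). Then D ⋁ (P, i : □φ) is winning if and only if D ⋁ (P, j : ¬R(i,j) ∨ φ) is winning. -/

import Mathlib

/-- Hybrid logic formulas over nominals `ℕ` and propositional variables `ℕ`
(the two sorts are kept disjoint by the constructors). -/
inductive Form : Type where
  | prop : ℕ → Form
  | nom : ℕ → Form
  | rel : ℕ → ℕ → Form
  | and : Form → Form → Form
  | or : Form → Form → Form
  | imp : Form → Form → Form
  | neg : Form → Form
  | at_ : ℕ → Form → Form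
  | box : Form → Form
  | dia : Form → Form

/-- A model for hybrid logic: a nonempty set of worlds, an accessibility
relation, a valuation and an assignment of nominals to worlds. -/
structure Model where
  W : Type
  ne : Nonempty W
  R : W → W → Prop
  V : ℕ → W → Prop
  g : ℕ → W

/-- Satisfaction of a formula at a world of a model. -/
def sat (M : Model) : M.W → Form → Prop
  | w, .prop p => M.V p w
  | w, .nom i => M.g i = w
  | _, .rel i j => M.R (M.g i) (M.g j)
  | w, .and φ ψ => sat M w φ ∧ sat M w ψ
  | w, .or φ ψ => sat M w φ ∨ sat M w ψ
  | w, .imp φ ψ => ¬ sat M w φ ∨ sat M w ψ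
  | w, .neg φ => ¬ sat M w φ
  | _, .at_ i φ => sat M (M.g i) φ
  | w, .box φ => ∀ v, M.R w v → sat M v φ
  | w, .dia φ => ∃ v, M.R w v ∧ sat M v φ

/-- A model is named iff every world has a name, i.e. the assignment is surjective. -/
def Model.Named (M : Model) : Prop := Function.Surjective M.g

/-- A formula is valid iff it is true at every world of every model. -/
def Valid (φ : Form) : Prop := ∀ (M : Model) (w : M.W), sat M w φ

/-- Roles: `pro` means I am the proponent (`P`), `opp` that I am the opponent (`O`). -/
inductive Role : Type where
  | pro : Role
  | opp : Role

/-- Role switch. -/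
def Role.swap : Role → Role
  | .pro => .opp
  | .opp => .pro

/-- Game states of the semantic game over a named model, with worlds referred to
by their names: `loc r i φ` is `Q, i : φ` and `glob r φ` is `Q : φ`. -/
inductive NState : Type where
  | loc : Role → ℕ → Form → NState
  | glob : Role → Form → NState

/-- Elementary formulas: `p`, `i`, `R(i,j)`. -/
def Form.elem : Form → Prop
  | .prop _ => True
  | .nom _ => True
  | .rel _ _ => True
  | _ => False

/-- Elementary game states: states `Q, i : φ` with `φ` elementary (these are the
leaves of the semantic game over named models). -/
def NState.elem : NState → Prop
  | .loc _ _ φ => φ.elem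
  | .glob _ _ => False

/-- States labelled "I" (where it is My choice); all other non-leaf states are labelled "Y". -/
def NState.myTurn : NState → Prop
  | .loc .pro _ (.or _ _) => True
  | .loc .pro _ (.imp _ _) => True
  | .loc .pro _ (.neg _) => True
  | .loc .pro _ (.at_ _ _) => True
  | .loc .pro _ (.dia _) => True
  | .loc .opp _ (.and _ _) => True
  | .loc .opp _ (.box _) => True
  | .glob .opp _ => True
  | _ => False

/-- The (model-independent) child relation of the semantic game over named models,
using the reformulated rules `(R_□)`, `(R_◇)` and `(R_U)`:
`NChild s t` says that `t` is a child of `s` in the game tree. -/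
inductive NChild : NState → NState → Prop where
  | orL (r i φ ψ) : NChild (.loc r i (.or φ ψ)) (.loc r i φ)
  | orR (r i φ ψ) : NChild (.loc r i (.or φ ψ)) (.loc r i ψ)
  | andL (r i φ ψ) : NChild (.loc r i (.and φ ψ)) (.loc r i φ)
  | andR (r i φ ψ) : NChild (.loc r i (.and φ ψ)) (.loc r i ψ)
  | impL (r i φ ψ) : NChild (.loc r i (.imp φ ψ)) (.loc r.swap i φ)
  | impR (r i φ ψ) : NChild (.loc r i (.imp φ ψ)) (.loc r i ψ)
  | neg (r i φ) : NChild (.loc r i (.neg φ)) (.loc r.swap i φ)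
  | at_ (r i j φ) : NChild (.loc r i (.at_ j φ)) (.loc r j φ)
  | box (r i φ) (j : ℕ) : NChild (.loc r i (.box φ)) (.loc r j (.or (.neg (.rel i j)) φ))
  | dia (r i φ) (j : ℕ) : NChild (.loc r i (.dia φ)) (.loc r j (.and (.rel i j) φ))
  | glob (r φ) (i : ℕ) : NChild (.glob r φ) (.loc r i φ)

/-- The label of an elementary leaf state in the game over the model `M`:
"I" iff the corresponding elementary claim is correct. -/
def elemIWin (M : Model) : NState → Prop
  | .loc .pro i φ => sat M (M.g i) φ
  | .loc .opp i φ => ¬ sat M (M.g i) φ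
  | .glob _ _ => False

/-- I have a winning strategy for the semantic game `G(M, s)` over a named model:
at "I"-nodes I keep one child, at "Y"-nodes all children, and all leaves are labelled "I". -/
inductive IWinsN (M : Model) : NState → Prop where
  | leaf {s} : s.elem → elemIWin M s → IWinsN M s
  | move {s t} : s.myTurn → NChild s t → IWinsN M t → IWinsN M s
  | resp {s} : ¬ s.myTurn → ¬ s.elem → (∀ t, NChild s t → IWinsN M t) → IWinsN M s

/-- You have a winning strategy for the semantic game `G(M, s)` over a named model:
at "Y"-nodes You keep one child, at "I"-nodes all children, and all leaves are labelled "Y". -/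
inductive YWinsN (M : Model) : NState → Prop where
  | leaf {s} : s.elem → ¬ elemIWin M s → YWinsN M s
  | move {s t} : ¬ s.myTurn → NChild s t → YWinsN M t → YWinsN M s
  | resp {s} : s.myTurn → (∀ t, NChild s t → YWinsN M t) → YWinsN M s

/-- A disjunctive state: a finite multiset of game states. -/
abbrev DState : Type := Multiset NState

/-- A disjunctive state is elementary iff all its game states are. -/
def DElem (D : DState) : Prop := ∀ s ∈ D, s.elem

/-- A regulation function maps every non-elementary disjunctive state to one of
its non-elementary game states. -/
def IsRegulation (ρ : DState → NState) : Prop :=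
  ∀ D : DState, ¬ DElem D → ρ D ∈ D ∧ ¬ (ρ D).elem

/-- `D` is game valid: for every named model `M` there is a member of `D` for
which I have a winning strategy in the semantic game over `M`. -/
def GameValid (D : DState) : Prop :=
  ∀ M : Model, M.Named → ∃ s ∈ D, IWinsN M s

/-- I have a winning strategy for the disjunctive game `DG(D, ρ)`.
At the state `g ⋁ D` with `ρ (g ⋁ D) = g`: if `g` is labelled "I", I either move in `g`
or duplicate `g`; if `g` is labelled "Y", You move in `g` and I must win after every move.
An elementary disjunctive state is a leaf labelled "I" (winning for Me) iff for every named
model some member of it is a leaf labelled "I" of the semantic game over that model.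
Since winning strategies are wellfounded trees, infinite plays are not winning for Me. -/
inductive DWins (ρ : DState → NState) : DState → Prop where
  | leaf {D : DState} : DElem D → (∀ M : Model, M.Named → ∃ s ∈ D, IWinsN M s) →
      DWins ρ D
  | movI {D : DState} {g g' : NState} : ρ (g ::ₘ D) = g → g.myTurn → NChild g g' →
      DWins ρ (g' ::ₘ D) → DWins ρ (g ::ₘ D)
  | dup {D : DState} {g : NState} : ρ (g ::ₘ D) = g → g.myTurn →
      DWins ρ (g ::ₘ g ::ₘ D) → DWins ρ (g ::ₘ D)
  | movY {D : DState} {g : NState} : ρ (g ::ₘ D) = g → ¬ g.myTurn → ¬ g.elem →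
      (∀ g', NChild g g' → DWins ρ (g' ::ₘ D)) → DWins ρ (g ::ₘ D)

/-- `D` is winning: there is a regulation `ρ` such that I have a winning strategy
for `DG(D, ρ)`. -/
def Winning (D : DState) : Prop :=
  ∃ ρ : DState → NState, IsRegulation ρ ∧ DWins ρ D

/-- `Form.occurs k φ`: the nominal `k` occurs in the formula `φ`. -/
def Form.occurs (k : ℕ) : Form → Prop
  | .prop _ => False
  | .nom i => i = k
  | .rel i j => i = k ∨ j = k
  | .and φ ψ => φ.occurs k ∨ ψ.occurs k
  | .or φ ψ => φ.occurs k ∨ ψ.occurs k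
  | .imp φ ψ => φ.occurs k ∨ ψ.occurs k
  | .neg φ => φ.occurs k
  | .at_ i φ => i = k ∨ φ.occurs k
  | .box φ => φ.occurs k
  | .dia φ => φ.occurs k

/-- A nominal occurs in a game state iff it occurs as its label or in its formula. -/
def NState.occurs (k : ℕ) : NState → Prop
  | .loc _ i φ => i = k ∨ φ.occurs k
  | .glob _ φ => φ.occurs k

/-- A nominal occurs in a disjunctive state iff it occurs in one of its game states. -/
def DOccurs (k : ℕ) (D : DState) : Prop := ∃ s ∈ D, s.occurs k

/-!
Freshness enters only through substitution: winning disjunctive states are closed under arbitrary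
renamings of nominals. For a surjective renaming this holds because a strategy can be renamed
move by move (surjectivity supplies preimages for the nominals named by You, and keeps reassigned
models named); any renaming agrees with a surjective one on the finitely many nominals that occur.
Thus a strategy for `P, j : ¬R(i,j) ∨ φ` with `j` fresh yields one for every other choice of `j`.
Conversely, Your moves are invertible: deferring one of them never hurts Me.

Both arguments recombine strategies for different regulations, which is possible because a single
regulation wins from all winning states. To get it, well-order the regulations and follow, at each
state, the least one that wins there: along a play this least regulation never increases, hence is
eventually constant.
-/

theorem NState.not_elem_of_myTurn {g : NState} (h : g.myTurn) : ¬ g.elem := by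
  rcases g with ⟨r, _, φ⟩ | ⟨_, _⟩
  · cases r <;> cases φ <;> simp_all [NState.myTurn, NState.elem, Form.elem]
  · exact not_false

theorem NChild.not_elem {g g' : NState} (h : NChild g g') : ¬ g.elem := by
  cases h <;> exact not_false

/-! ### Regulations -/

theorem exists_isRegulation : ∃ ρ, IsRegulation ρ := by
  have h (D : DState) : ∃ g, ¬ DElem D → g ∈ D ∧ ¬ g.elem := by
    by_cases hD : DElem D
    · exact ⟨.glob .pro (.prop 0), absurd hD⟩
    · obtain ⟨g, hg⟩ : ∃ g, g ∈ D ∧ ¬ g.elem := by simpa [DElem] using hD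
      exact ⟨g, fun _ => hg⟩
  choose ρ hρ using h
  exact ⟨ρ, hρ⟩

theorem IsRegulation.update [DecidableEq DState] {ρ : DState → NState} (hρ : IsRegulation ρ)
    {D : DState} {g : NState} (hg : g ∈ D) (he : ¬ g.elem) :
    IsRegulation (Function.update ρ D g) := by
  intro E hE
  obtain rfl | hne := eq_or_ne E D
  · simpa using ⟨hg, he⟩
  · simpa [hne] using hρ E hE

theorem DWins.update_of_not_dWins [DecidableEq DState] {ρ : DState → NState} {D E : DState}
    (g : NState) (hE : DWins ρ E) (hD : ¬ DWins ρ D) : DWins (Function.update ρ D g) E := by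
  have update_eq {E : DState} (hE : DWins ρ E) : Function.update ρ D g E = ρ E :=
    Function.update_of_ne (by rintro rfl; exact hD hE) _ _
  induction hE with
  | leaf helem hvalid => exact .leaf helem hvalid
  | movI hρ hI hc hw ih => exact .movI ((update_eq (.movI hρ hI hc hw)).trans hρ) hI hc ih
  | dup hρ hI hw ih => exact .dup ((update_eq (.dup hρ hI hw)).trans hρ) hI ih
  | movY hρ hY he hw ih => exact .movY ((update_eq (.movY hρ hY he hw)).trans hρ) hY he ih

/-- A uniform regulation is one under which I win from every winning disjunctive state. -/
def IsUniformRegulation (ρ : DState → NState) : Prop :=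
  IsRegulation ρ ∧ ∀ D, Winning D → DWins ρ D

theorem isUniformRegulation_of_lt_or_eq {r : (DState → NState) → (DState → NState) → Prop}
    (hr : WellFounded r) {ρ : DState → NState} (hρ : IsRegulation ρ)
    (hmin : ∀ σ D, IsRegulation σ → DWins σ D →
      ρ D = σ D ∨ ∃ τ, r τ σ ∧ IsRegulation τ ∧ DWins τ D) :
    IsUniformRegulation ρ := by
  refine ⟨hρ, ?_⟩
  rintro D ⟨σ, hσ, hwin⟩
  induction σ using hr.induction generalizing D with
  | _ σ IH =>
  have follow {E : DState} (hE : DWins σ E) (hstep : ρ E = σ E → DWins ρ E) : DWins ρ E :=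
    (hmin σ E hσ hE).elim hstep fun ⟨τ, hlt, hτ, hw⟩ => IH τ hlt E hτ hw
  clear hσ
  induction hwin with
  | leaf helem hvalid => exact .leaf helem hvalid
  | movI hg hI hc hw ih => exact follow (.movI hg hI hc hw) fun h => .movI (h.trans hg) hI hc ih
  | dup hg hI hw ih => exact follow (.dup hg hI hw) fun h => .dup (h.trans hg) hI ih
  | movY hg hY he hw ih => exact follow (.movY hg hY he hw) fun h => .movY (h.trans hg) hY he ih

theorem exists_isUniformRegulation : ∃ ρ, IsUniformRegulation ρ := by
  obtain ⟨ρ₀, hρ₀⟩ := exists_isRegulation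
  let r : (DState → NState) → (DState → NState) → Prop := WellOrderingRel
  have hr : WellFounded r := WellOrderingRel.isWellOrder.wf
  have exists_least (D : DState) : ∃ ρ, IsRegulation ρ ∧
      ∀ σ, IsRegulation σ → DWins σ D → DWins ρ D ∧ ¬ r σ ρ := by
    by_cases hD : Winning D
    · obtain ⟨ρ, ⟨hρ, hwin⟩, hleast⟩ := hr.has_min {ρ | IsRegulation ρ ∧ DWins ρ D} hD
      exact ⟨ρ, hρ, fun σ hσ hw => ⟨hwin, hleast σ ⟨hσ, hw⟩⟩⟩
    · exact ⟨ρ₀, hρ₀, fun σ hσ hw => absurd ⟨σ, hσ, hw⟩ hD⟩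
  choose least hreg hleast using exists_least
  refine ⟨fun D => least D D, isUniformRegulation_of_lt_or_eq hr (fun D => hreg D D) ?_⟩
  intro σ D hσ hw
  obtain ⟨hwin, hnlt⟩ := hleast D σ hσ hw
  obtain hlt | heq | hgt := trichotomous_of r (least D) σ
  · exact .inr ⟨least D, hlt, hreg D, hwin⟩
  · exact .inl (congrFun heq D)
  · exact absurd hgt hnlt

theorem Winning.of_forall_isUniformRegulation {D : DState} {g : NState} (hg : g ∈ D)
    (he : ¬ g.elem) (h : ∀ ρ, IsUniformRegulation ρ → ρ D = g → DWins ρ D) : Winning D := by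
  classical
  obtain ⟨ρ, hρ, hwin⟩ := exists_isUniformRegulation
  by_contra hD
  have hnD : ¬ DWins ρ D := fun hw => hD ⟨ρ, hρ, hw⟩
  have hρg : IsRegulation (Function.update ρ D g) := hρ.update hg he
  exact hD ⟨_, hρg, h _ ⟨hρg, fun E hE => (hwin E hE).update_of_not_dWins g hnD⟩ (by simp)⟩

/-! ### Closure properties of winning disjunctive states -/

section Closure

variable {D : DState} {g g' : NState}

theorem Winning.of_gameValid (he : DElem D) (hD : GameValid D) : Winning D :=
  exists_isRegulation.imp fun _ hρ => ⟨hρ, .leaf he hD⟩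

theorem Winning.movI (hI : g.myTurn) (hc : NChild g g') (h : Winning (g' ::ₘ D)) :
    Winning (g ::ₘ D) :=
  .of_forall_isUniformRegulation (Multiset.mem_cons_self g D) (NState.not_elem_of_myTurn hI)
    fun _ hρ hg => .movI hg hI hc (hρ.2 _ h)

theorem Winning.dup (hI : g.myTurn) (h : Winning (g ::ₘ g ::ₘ D)) : Winning (g ::ₘ D) :=
  .of_forall_isUniformRegulation (Multiset.mem_cons_self g D) (NState.not_elem_of_myTurn hI)
    fun _ hρ hg => .dup hg hI (hρ.2 _ h)

theorem Winning.movY (hY : ¬ g.myTurn) (he : ¬ g.elem)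
    (h : ∀ g', NChild g g' → Winning (g' ::ₘ D)) : Winning (g ::ₘ D) :=
  .of_forall_isUniformRegulation (Multiset.mem_cons_self g D) he
    fun _ hρ hg => .movY hg hY he fun g' hc => hρ.2 _ (h g' hc)

theorem Winning.child (hY : ¬ g.myTurn) (hc : NChild g g') (h : Winning (g ::ₘ D)) :
    Winning (g' ::ₘ D) := by
  obtain ⟨ρ, hρ, hwin⟩ := h
  generalize hE : g ::ₘ D = E at hwin
  induction hwin generalizing D with
  | leaf helem _ =>
    subst hE
    exact absurd (helem g (Multiset.mem_cons_self g D)) hc.not_elem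
  | movI _ hI hk _ ih =>
    obtain ⟨rfl, -⟩ | ⟨-, F, rfl, rfl⟩ := Multiset.cons_eq_cons.1 hE
    · exact absurd hI hY
    · rw [Multiset.cons_swap]
      refine .movI hI hk ?_
      rw [Multiset.cons_swap]
      exact ih (Multiset.cons_swap ..)
  | @dup _ k _ hI _ ih =>
    obtain ⟨rfl, -⟩ | ⟨-, F, rfl, rfl⟩ := Multiset.cons_eq_cons.1 hE
    · exact absurd hI hY
    · have swap (a : NState) : a ::ₘ k ::ₘ k ::ₘ F = k ::ₘ k ::ₘ a ::ₘ F := by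
        rw [Multiset.cons_swap a, Multiset.cons_swap a]
      rw [Multiset.cons_swap]
      refine .dup hI ?_
      rw [← swap]
      exact ih (swap g)
  | movY _ hY' he hwin ih =>
    obtain ⟨rfl, rfl⟩ | ⟨-, F, rfl, rfl⟩ := Multiset.cons_eq_cons.1 hE
    · exact ⟨ρ, hρ, hwin g' hc⟩
    · rw [Multiset.cons_swap]
      refine .movY hY' he fun k' hk => ?_
      rw [Multiset.cons_swap]
      exact ih k' hk (Multiset.cons_swap ..)

theorem winning_cons_iff_forall_child (hY : ¬ g.myTurn) (he : ¬ g.elem) :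
    Winning (g ::ₘ D) ↔ ∀ g', NChild g g' → Winning (g' ::ₘ D) :=
  ⟨fun h _ hc => h.child hY hc, .movY hY he⟩

end Closure

theorem winning_box_iff_forall {D : DState} {i : ℕ} {φ : Form} :
    Winning (.loc .pro i (.box φ) ::ₘ D) ↔
      ∀ k, Winning (.loc .pro k (.or (.neg (.rel i k)) φ) ::ₘ D) := by
  rw [winning_cons_iff_forall_child (g := .loc .pro i (.box φ)) not_false not_false]
  refine ⟨fun h k => h _ (.box .pro i φ k), fun h g' hc => ?_⟩
  cases hc with
  | box _ _ _ k => exact h k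

/-! ### Renaming nominals -/

/-- The result of renaming the nominals of a formula along `σ`, which need not be injective. -/
def Form.rename (σ : ℕ → ℕ) : Form → Form
  | .prop p => .prop p
  | .nom i => .nom (σ i)
  | .rel i j => .rel (σ i) (σ j)
  | .and φ ψ => .and (φ.rename σ) (ψ.rename σ)
  | .or φ ψ => .or (φ.rename σ) (ψ.rename σ)
  | .imp φ ψ => .imp (φ.rename σ) (ψ.rename σ)
  | .neg φ => .neg (φ.rename σ)
  | .at_ i φ => .at_ (σ i) (φ.rename σ)
  | .box φ => .box (φ.rename σ)
  | .dia φ => .dia (φ.rename σ)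

/-- The result of renaming the nominals of a game state, both in its label and in its formula. -/
def NState.rename (σ : ℕ → ℕ) : NState → NState
  | .loc r i φ => .loc r (σ i) (φ.rename σ)
  | .glob r φ => .glob r (φ.rename σ)

/-- The model in which the nominal `i` names the world that `σ i` names in `M`. -/
def Model.reassign (M : Model) (σ : ℕ → ℕ) : Model := { M with g := M.g ∘ σ }

section Rename

variable {σ τ : ℕ → ℕ} {M : Model} {φ : Form} {s t : NState} {D : DState}

theorem Form.rename_congr (h : ∀ k, φ.occurs k → σ k = τ k) : φ.rename σ = φ.rename τ := by
  induction φ <;> simp_all [Form.rename, Form.occurs]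

theorem NState.rename_congr (h : ∀ k, s.occurs k → σ k = τ k) : s.rename σ = s.rename τ := by
  cases s with
  | loc r i φ =>
    exact congrArg₂ (NState.loc r) (h i (.inl rfl)) (φ.rename_congr fun k hk => h k (.inr hk))
  | glob r φ => exact congrArg (NState.glob r) (φ.rename_congr h)

theorem Form.rename_id (φ : Form) : φ.rename id = φ := by
  induction φ <;> simp_all [Form.rename]

theorem NState.rename_id (s : NState) : s.rename id = s := by
  cases s <;> simp [NState.rename, Form.rename_id]

theorem map_rename_congr (h : ∀ k, DOccurs k D → σ k = τ k) :
    D.map (NState.rename σ) = D.map (NState.rename τ) :=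
  Multiset.map_congr rfl fun s hs => s.rename_congr fun k hk => h k ⟨s, hs, hk⟩

theorem map_rename_id (D : DState) : D.map (NState.rename id) = D := by
  simp [NState.rename_id]

theorem NState.elem_rename : (s.rename σ).elem ↔ s.elem := by
  rcases s with ⟨_, _, φ⟩ | _
  · cases φ <;> rfl
  · rfl

theorem NState.myTurn_rename : (s.rename σ).myTurn ↔ s.myTurn := by
  rcases s with ⟨r, _, φ⟩ | ⟨r, _⟩
  · cases r <;> cases φ <;> rfl
  · cases r <;> rfl

theorem NChild.rename (h : NChild s t) : NChild (s.rename σ) (t.rename σ) := by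
  cases h <;> constructor

theorem NChild.exists_of_rename (hσ : σ.Surjective) (h : NChild (s.rename σ) t) :
    ∃ s', NChild s s' ∧ s'.rename σ = t := by
  rcases s with ⟨r, i, φ⟩ | ⟨r, φ⟩
  · cases φ <;> cases h
    case or.orL φ ψ => exact ⟨_, .orL r i φ ψ, rfl⟩
    case or.orR φ ψ => exact ⟨_, .orR r i φ ψ, rfl⟩
    case and.andL φ ψ => exact ⟨_, .andL r i φ ψ, rfl⟩
    case and.andR φ ψ => exact ⟨_, .andR r i φ ψ, rfl⟩
    case imp.impL φ ψ => exact ⟨_, .impL r i φ ψ, rfl⟩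
    case imp.impR φ ψ => exact ⟨_, .impR r i φ ψ, rfl⟩
    case neg.neg φ => exact ⟨_, .neg r i φ, rfl⟩
    case at_.at_ j φ => exact ⟨_, .at_ r i j φ, rfl⟩
    case box.box φ k =>
      obtain ⟨j, rfl⟩ := hσ k
      exact ⟨_, .box r i φ j, rfl⟩
    case dia.dia φ k =>
      obtain ⟨j, rfl⟩ := hσ k
      exact ⟨_, .dia r i φ j, rfl⟩
  · cases h with
    | glob _ _ k =>
    obtain ⟨j, rfl⟩ := hσ k
    exact ⟨_, .glob r φ j, rfl⟩

theorem sat_rename (w : M.W) : sat M w (φ.rename σ) ↔ sat (M.reassign σ) w φ := by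
  induction φ generalizing w <;> simp_all [Form.rename, sat, Model.reassign]

theorem elemIWin_rename : elemIWin M (s.rename σ) ↔ elemIWin (M.reassign σ) s := by
  rcases s with ⟨_ | _, i, φ⟩ | _
  · exact sat_rename _
  · exact not_congr (sat_rename _)
  · rfl

theorem IWinsN.rename (hσ : σ.Surjective) (h : IWinsN (M.reassign σ) s) :
    IWinsN M (s.rename σ) := by
  induction h with
  | leaf he hw => exact .leaf (NState.elem_rename.2 he) (elemIWin_rename.2 hw)
  | move hI hc _ ih => exact .move (NState.myTurn_rename.2 hI) hc.rename ih
  | resp hY he _ ih =>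
    refine .resp (mt NState.myTurn_rename.1 hY) (mt NState.elem_rename.1 he) fun u hu => ?_
    obtain ⟨t, ht, rfl⟩ := hu.exists_of_rename hσ
    exact ih t ht

theorem GameValid.rename (hσ : σ.Surjective) (h : GameValid D) :
    GameValid (D.map (NState.rename σ)) := by
  intro M hM
  obtain ⟨s, hs, hw⟩ := h (M.reassign σ) (hM.comp hσ)
  exact ⟨s.rename σ, Multiset.mem_map_of_mem _ hs, hw.rename hσ⟩

theorem DElem.rename (h : DElem D) : DElem (D.map (NState.rename σ)) := by
  intro s hs
  obtain ⟨t, ht, rfl⟩ := Multiset.mem_map.1 hs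
  exact NState.elem_rename.2 (h t ht)

theorem Winning.rename_of_surjective (hσ : σ.Surjective) (h : Winning D) :
    Winning (D.map (NState.rename σ)) := by
  obtain ⟨ρ, -, hwin⟩ := h
  induction hwin with
  | leaf helem hvalid => exact .of_gameValid helem.rename (GameValid.rename hσ hvalid)
  | movI _ hI hc _ ih =>
    rw [Multiset.map_cons] at ih ⊢
    exact .movI (NState.myTurn_rename.2 hI) hc.rename ih
  | dup _ hI _ ih =>
    simp only [Multiset.map_cons] at ih ⊢
    exact .dup (NState.myTurn_rename.2 hI) ih
  | movY _ hY he _ ih =>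
    simp only [Multiset.map_cons] at ih ⊢
    refine .movY (mt NState.myTurn_rename.1 hY) (mt NState.elem_rename.1 he) fun u hu => ?_
    obtain ⟨t, ht, rfl⟩ := hu.exists_of_rename hσ
    exact ih t ht

theorem Form.finite_setOf_occurs (φ : Form) : {k | φ.occurs k}.Finite := by
  induction φ <;> simp_all [Form.occurs, Set.ofPred_or]

theorem NState.finite_setOf_occurs (s : NState) : {k | s.occurs k}.Finite := by
  cases s with
  | loc _ i φ => exact (Form.at_ i φ).finite_setOf_occurs
  | glob _ φ => exact φ.finite_setOf_occurs

theorem finite_setOf_dOccurs (D : DState) : {k | DOccurs k D}.Finite := by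
  have h : {k | DOccurs k D} = ⋃ s ∈ {s | s ∈ D}, {k | s.occurs k} := by
    ext k
    simp [DOccurs]
  rw [h]
  exact D.finite_toSet.biUnion fun s _ => s.finite_setOf_occurs

theorem exists_surjective_eqOn_of_finite {α : Type*} [Infinite α] (f : α → α) {s : Set α}
    (hs : s.Finite) : ∃ σ : α → α, σ.Surjective ∧ Set.EqOn σ f s := by
  classical
  obtain ⟨e⟩ : Nonempty (↥sᶜ ≃ α) :=
    Cardinal.eq.1 (Cardinal.mk_compl_of_infinite s
      (hs.lt_aleph0.trans_le (Cardinal.aleph0_le_mk α)))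
  refine ⟨fun a => if h : a ∈ s then f a else e ⟨a, h⟩, fun b => ?_, fun a ha => dif_pos ha⟩
  obtain ⟨⟨a, ha⟩, rfl⟩ := e.surjective b
  exact ⟨a, dif_neg ha⟩

theorem Winning.rename (h : Winning D) (σ : ℕ → ℕ) : Winning (D.map (NState.rename σ)) := by
  obtain ⟨τ, hτ, hτσ⟩ := exists_surjective_eqOn_of_finite σ (finite_setOf_dOccurs D)
  rw [← map_rename_congr hτσ]
  exact h.rename_of_surjective hτ

end Rename

/-- (Proposition 2, part 2) For a nominal `j` not occurring in `D ⋁ (P, i : □φ)`: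
`D ⋁ (P, i : □φ)` is winning iff `D ⋁ (P, j : ¬R(i,j) ∨ φ)` is winning. -/
theorem winning_box_iff_winning_fresh (D : DState) (i j : ℕ) (φ : Form)
    (hj : ¬ DOccurs j (NState.loc .pro i (.box φ) ::ₘ D)) :
    Winning (NState.loc .pro i (.box φ) ::ₘ D) ↔
      Winning (NState.loc .pro j (.or (.neg (.rel i j)) φ) ::ₘ D) := by
  refine winning_box_iff_forall.trans ⟨fun h => h j, fun h k => ?_⟩
  have hfix (n : ℕ) (hn : DOccurs n (NState.loc .pro i (.box φ) ::ₘ D)) :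
      Function.update id j k n = id n :=
    Function.update_of_ne (by rintro rfl; exact hj hn) _ _
  have hi : Function.update id j k i = i := hfix i ⟨_, Multiset.mem_cons_self _ _, .inl rfl⟩
  have hφ : φ.rename (Function.update id j k) = φ :=
    (φ.rename_congr fun n hn => hfix n ⟨_, Multiset.mem_cons_self _ _, .inr hn⟩).trans φ.rename_id
  have hD : D.map (NState.rename (Function.update id j k)) = D :=
    (map_rename_congr fun n ⟨s, hs, hn⟩ => hfix n ⟨s, Multiset.mem_cons_of_mem hs, hn⟩).trans
      (map_rename_id D)
  simpa [NState.rename, Form.rename, hi, hφ, hD] using h.rename (Function.update id j k)
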